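/- Let H be a real Hilbert space, λ > 0, γ > 0, k₀ > 0. Let 𝓑 : H → H be a bounded self-adjoint linear operator with ⟨v, 𝓑v⟩ ≥ 0 and ‖𝓑v‖² ≤ λ⟨v, 𝓑v⟩ for all v ∈ H. Let 𝓛 : H → H be Lipschitz with constant k₀ and strongly monotone: ⟨f₁ − f₂, 𝓛f₁ − 𝓛f₂⟩ ≤ −γ‖f₁ − f₂‖² for all f₁, f₂ ∈ H. Let u ∈ H satisfy 𝓛u = 0, fix g ∈ H and v₀ ∈ H, and let v : [0,∞) → H be differentiable with v(0) = v₀ and v'(t) = 𝓛(𝓑v_t + u + g) for all t ≥ 0. Define Q_t := 𝓑v_t + u + g. Then there exists a constant C > 0, depending only on γ, λ and k₀, such that for all t ≥ 0, ∫₀ᵗ ‖Q_s − u‖² ds ≤ C t ‖g‖² + C ⟨v₀, 𝓑v₀⟩. -/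

import Mathlib

open scoped RealInnerProductSpace

/-- Key quantitative estimate: for `Q_t = 𝓑v_t + u + g` driven by
`v' = 𝓛(𝓑v + u + g)`, with `𝓑` positive self-adjoint satisfying `‖𝓑v‖² ≤ λ⟨v,𝓑v⟩`
and `𝓛` Lipschitz and strongly monotone with `𝓛u = 0`, one has
`∫₀ᵗ ‖Q_s − u‖² ds ≤ C t ‖g‖² + C ⟨v₀, 𝓑v₀⟩`, with `C` depending only on `γ, λ, k₀`. -/
theorem stmt_12 {H : Type*} [NormedAddCommGroup H] [InnerProductSpace ℝ H] [CompleteSpace H]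
    (lam γ k₀ : ℝ) (hlam : 0 < lam) (hγ : 0 < γ) (hk₀ : 0 < k₀) :
    ∃ C : ℝ, 0 < C ∧
      ∀ (B : H →L[ℝ] H), (∀ x y : H, ⟪B x, y⟫ = ⟪x, B y⟫) →
        (∀ v : H, 0 ≤ ⟪v, B v⟫) → (∀ v : H, ‖B v‖ ^ 2 ≤ lam * ⟪v, B v⟫) →
      ∀ (L : H → H), LipschitzWith k₀.toNNReal L →
        (∀ f₁ f₂ : H, ⟪f₁ - f₂, L f₁ - L f₂⟫ ≤ -γ * ‖f₁ - f₂‖ ^ 2) →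
      ∀ (u : H), L u = 0 →
      ∀ (g v₀ : H) (v : ℝ → H), v 0 = v₀ →
        (∀ t ∈ Set.Ici (0 : ℝ),
          HasDerivWithinAt v (L (B (v t) + u + g)) (Set.Ici 0) t) →
      ∀ t : ℝ, 0 ≤ t →
        ∫ s in Set.Icc (0 : ℝ) t, ‖(B (v s) + u + g) - u‖ ^ 2
          ≤ C * t * ‖g‖ ^ 2 + C * ⟪v₀, B v₀⟫ := by
  refine ⟨1 / γ + k₀ ^ 2 / γ ^ 2, by positivity, ?_⟩
  intro B hB hpos _ L hL hmono u hu g v₀ v hv0 hv t ht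
  have hcv : ContinuousOn v (Set.Icc 0 t) := fun s hs =>
    ((hv s hs.1).continuousWithinAt).mono (fun x hx => hx.1)
  have hcB : ContinuousOn (fun s => B (v s)) (Set.Icc 0 t) := B.continuous.comp_continuousOn hcv
  have hcw : ContinuousOn (fun s => γ * ‖(B (v s) + u + g) - u‖ ^ 2) (Set.Icc 0 t) := by
    fun_prop
  have key := intervalIntegral.integral_le_sub_of_hasDeriv_right_of_le (a := 0) (b := t)
    (g := fun s => s * (k₀ ^ 2 / γ * ‖g‖ ^ 2) - ⟪v s, B (v s)⟫)
    (g' := fun s => 1 * (k₀ ^ 2 / γ * ‖g‖ ^ 2) - (⟪v s, B (L (B (v s) + u + g))⟫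
      + ⟪L (B (v s) + u + g), B (v s)⟫))
    (φ := fun s => γ * ‖(B (v s) + u + g) - u‖ ^ 2) ht
    ((continuousOn_id.mul continuousOn_const).sub (hcv.inner hcB))
    (by
      intro s hs
      have h1 : HasDerivWithinAt v (L (B (v s) + u + g)) (Set.Ioi s) s :=
        (hv s hs.1.le).mono (fun x hx => (hs.1.trans hx).le)
      have h2 := B.hasFDerivAt.comp_hasDerivWithinAt s h1
      exact ((hasDerivWithinAt_id s _).mul_const _).sub (h1.inner ℝ h2))
    (hcw.integrableOn_Icc)
    (by
      intro s _
      have h1 := hmono (B (v s) + u + g) u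
      have h2 := hL.dist_le_mul (B (v s) + u + g) u
      rw [dist_eq_norm, dist_eq_norm, hu, sub_zero, Real.coe_toNNReal _ hk₀.le] at h2
      rw [hu, sub_zero] at h1
      have e : B (v s) + u + g - u = B (v s) + g := by abel
      rw [e] at h1 h2
      rw [e, ← hB (v s), real_inner_comm (B (v s)) (L _)]
      rw [inner_add_left] at h1
      generalize L (B (v s) + u + g) = q at *
      have h3 : -⟪g, q⟫ ≤ ‖g‖ * ‖q‖ := (neg_le_abs _).trans (abs_real_inner_le_norm g q)
      have h4 : ‖g‖ * ‖q‖ ≤ ‖g‖ * (k₀ * ‖B (v s) + g‖) := by gcongr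
      have h5 : 2 * (‖g‖ * (k₀ * ‖B (v s) + g‖)) ≤
          k₀ ^ 2 / γ * ‖g‖ ^ 2 + γ * ‖B (v s) + g‖ ^ 2 := by
        have : k₀ ^ 2 / γ * ‖g‖ ^ 2 + γ * ‖B (v s) + g‖ ^ 2
            - 2 * (‖g‖ * (k₀ * ‖B (v s) + g‖)) = (k₀ * ‖g‖ - γ * ‖B (v s) + g‖) ^ 2 / γ := by
          field_simp
          ring
        have h6 : 0 ≤ (k₀ * ‖g‖ - γ * ‖B (v s) + g‖) ^ 2 / γ := by positivity
        linarith
      linarith)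
  rw [intervalIntegral.integral_const_mul, intervalIntegral.integral_of_le ht,
    ← MeasureTheory.integral_Icc_eq_integral_Ioc, hv0] at key
  have hp := hpos (v t)
  have hp0 := hpos v₀
  set I := ∫ s in Set.Icc (0 : ℝ) t, ‖(B (v s) + u + g) - u‖ ^ 2
  have k2 : γ * I ≤ t * (k₀ ^ 2 / γ * ‖g‖ ^ 2) + ⟪v₀, B v₀⟫ := by linarith
  have k3 : I ≤ (t * (k₀ ^ 2 / γ * ‖g‖ ^ 2) + ⟪v₀, B v₀⟫) / γ := by
    rw [le_div_iff₀ hγ]; linarith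
  have k4 : (1 / γ + k₀ ^ 2 / γ ^ 2) * t * ‖g‖ ^ 2 + (1 / γ + k₀ ^ 2 / γ ^ 2) * ⟪v₀, B v₀⟫
      = (t * (k₀ ^ 2 / γ * ‖g‖ ^ 2) + ⟪v₀, B v₀⟫) / γ
        + (1 / γ * t * ‖g‖ ^ 2 + k₀ ^ 2 / γ ^ 2 * ⟪v₀, B v₀⟫) := by
    field_simp
    ring
  have k5 : 0 ≤ 1 / γ * t * ‖g‖ ^ 2 + k₀ ^ 2 / γ ^ 2 * ⟪v₀, B v₀⟫ := by positivity
  linarith
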